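/- arXiv:math/0207031 — 4 statements merged into one kernel-verified Lean document; each statement's English description precedes it below -/
import Mathlib

section
/- In the universal enveloping algebra U(gl(m,ℂ)), for all q ≥ 0 and all indices 1 ≤ i,j,k,l ≤ m, the commutator identity [e_{ij}, e_{kl}^q] = δ_{jk}·e_{il}^q − δ_{il}·e_{kj}^q holds, where [a,b] = ab − ba. -/
open Finset

attribute [local instance 100] LieRing.ofAssociativeRing

/-- `gl(m, ℂ)`: the Lie algebra of `m × m` complex matrices. -/
abbrev glm (m : ℕ) := Matrix (Fin m) (Fin m) ℂ

/-- The universal enveloping algebra `U(gl(m,ℂ))`. -/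
abbrev UEA (m : ℕ) := UniversalEnvelopingAlgebra ℂ (glm m)

/-- The image of the matrix unit `e_{kl}` in `U(gl(m,ℂ))`. -/
noncomputable def E {m : ℕ} (k l : Fin m) : UEA m :=
  UniversalEnvelopingAlgebra.ι ℂ (Matrix.single k l (1 : ℂ))

/-- `e_{kl}^q`, defined by `e_{kl}^0 = δ_{kl}` and `e_{kl}^{q+1} = Σ_i e_{ki} e_{il}^q`. -/
noncomputable def Epow {m : ℕ} : ℕ → Fin m → Fin m → UEA m
  | 0, k, l => if k = l then 1 else 0
  | q + 1, k, l => ∑ i, E k i * Epow q i l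

/-!
Collect the generators in a matrix `M = (e_{kl})` with entries in the enveloping algebra; then
`e_{kl}^q` is the `(k, l)` entry of `M ^ q`. Read entrywise, the asserted identity says that `M ^ q`
commutes with `e_{ij} • 1 - single j i 1`, where the indices of the matrix unit are transposed. For
`q = 1` this is the defining bracket of `gl`, and whatever commutes with `M` commutes with its
powers.
-/

section

variable {n : Type*} [Fintype n] [DecidableEq n]

section Ring

variable {A : Type*} [Ring A]

theorem commute_scalar_sub_single_iff (a : A) (i j : n) (N : Matrix n n A) :
    Commute (Matrix.scalar n a - Matrix.single j i 1) N ↔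
      ∀ k l, a * N k l - N k l * a =
        (if j = k then N i l else 0) - (if i = l then N k j else 0) := by
  have left_entry (k l : n) : ((Matrix.scalar n a - Matrix.single j i (1 : A)) * N) k l =
      a * N k l - if j = k then N i l else 0 := by
    simp [sub_mul, Matrix.mul_apply, Matrix.diagonal_apply, Matrix.single_apply, ite_and]
  have right_entry (k l : n) : (N * (Matrix.scalar n a - Matrix.single j i (1 : A))) k l =
      N k l * a - if i = l then N k j else 0 := by
    simp [mul_sub, Matrix.mul_apply, Matrix.diagonal_apply, Matrix.single_apply, ite_and]
  simp only [commute_iff_eq, ← Matrix.ext_iff, left_entry, right_entry]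
  exact forall₂_congr fun k l ↦ sub_eq_sub_iff_sub_eq_sub

theorem lie_single_one_single_one (i j k l : n) :
    ⁅Matrix.single i j (1 : A), Matrix.single k l (1 : A)⁆ =
      (if j = k then Matrix.single i l 1 else 0) - (if i = l then Matrix.single k j 1 else 0) := by
  have single_mul_single (i j k l : n) : Matrix.single i j (1 : A) * Matrix.single k l (1 : A) =
      if j = k then Matrix.single i l 1 else 0 := by
    split_ifs with hjk
    · rw [hjk, Matrix.single_mul_single_same, mul_one]
    · exact Matrix.single_mul_single_of_ne _ _ _ _ hjk _
  simp only [LieRing.of_associative_ring_bracket, single_mul_single, eq_comm (a := l)]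

end Ring

variable {R A : Type*} [CommRing R] [Ring A] [Algebra R A]

/-- The matrix over `A` whose entries are the images of the matrix units under a representation
`φ : gl(n, R) → A`; the canonical map into the enveloping algebra is the universal case. -/
def generatorMatrix (φ : Matrix n n R →ₗ⁅R⁆ A) : Matrix n n A :=
  Matrix.of fun k l ↦ φ (Matrix.single k l 1)

theorem commute_scalar_sub_single_generatorMatrix (φ : Matrix n n R →ₗ⁅R⁆ A) (i j : n) :
    Commute (Matrix.scalar n (generatorMatrix φ i j) - Matrix.single j i 1)
      (generatorMatrix φ) := by
  refine (commute_scalar_sub_single_iff _ i j _).mpr fun k l ↦ ?_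
  simp only [generatorMatrix, Matrix.of_apply, ← LieRing.of_associative_ring_bracket,
    ← LieHom.map_lie, lie_single_one_single_one, map_sub, apply_ite φ, map_zero]

theorem statement0_general (φ : Matrix n n R →ₗ⁅R⁆ A) (q : ℕ) (i j k l : n) :
    generatorMatrix φ i j * (generatorMatrix φ ^ q) k l -
        (generatorMatrix φ ^ q) k l * generatorMatrix φ i j =
      (if j = k then (generatorMatrix φ ^ q) i l else 0) -
        (if i = l then (generatorMatrix φ ^ q) k j else 0) :=
  (commute_scalar_sub_single_iff _ i j _).mp
    ((commute_scalar_sub_single_generatorMatrix φ i j).pow_right q) k l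

end

theorem Epow_eq_generatorMatrix_pow {m : ℕ} (q : ℕ) (k l : Fin m) :
    Epow q k l = (generatorMatrix (UniversalEnvelopingAlgebra.ι ℂ) ^ q) k l := by
  induction q generalizing k with
  | zero => simp only [Epow, pow_zero, Matrix.one_apply]
  | succ q ih =>
    simp only [Epow, ih, pow_succ', Matrix.mul_apply, generatorMatrix, E, Matrix.of_apply]

/-- `[e_{ij}, e_{kl}^q] = δ_{jk} e_{il}^q − δ_{il} e_{kj}^q`. -/
theorem statement0 (m : ℕ) (hm : 1 ≤ m) (q : ℕ) (i j k l : Fin m) :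
    E i j * Epow q k l - Epow q k l * E i j =
      (if j = k then Epow (m := m) q i l else 0) -
        (if i = l then Epow (m := m) q k j else 0) := by
  simp only [Epow_eq_generatorMatrix_pow]
  exact statement0_general (UniversalEnvelopingAlgebra.ι ℂ) q i j k l
end

section
/- For every q ≥ 0, the Casimir element c_q = Σ_{k=1}^m e_{kk}^q commutes with ι(Z) for every Z ∈ gl(m,ℂ); consequently c_q lies in the center of the universal enveloping algebra U(gl(m,ℂ)). -/
open Finset

attribute [local instance 100] LieRing.ofAssociativeRing

/-- The Casimir element `c_q = Σ_k e_{kk}^q`. -/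
noncomputable def Cas (m : ℕ) (q : ℕ) : UEA m := ∑ k : Fin m, Epow q k k

/-!
Encode a Lie homomorphism `φ : gl(n, R) → A` into an associative algebra by the matrix `M`
over `A` with entries `φ e_{kl}`. The commutation relations of the matrix units say
precisely that, for every `Z`, the matrix `M` commutes with `φ(Z) 1 - Zᵀ`; hence so does
every power `M ^ q`. Taking traces gives
`[φ(Z), tr (M ^ q)] = tr (Zᵀ M ^ q) - tr (M ^ q Zᵀ)`,
which vanishes because the entries of `Z` are central in `A`. For `φ = ι` the trace
`tr (M ^ q)` is the Casimir element `c_q`, and it is central because the image of `ι`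
generates the enveloping algebra.
-/

open Matrix UniversalEnvelopingAlgebra

section EnvelopingAlgebra

variable {R L : Type*} [CommRing R] [LieRing L] [LieAlgebra R L]

theorem adjoin_range_envelopingAlgebra_ι :
    Algebra.adjoin R (Set.range (ι R : L → UniversalEnvelopingAlgebra R L)) = ⊤ := by
  have range_eq : Set.range (ι R : L → UniversalEnvelopingAlgebra R L) =
      mkAlgHom R L '' Set.range (TensorAlgebra.ι R) := by
    rw [← Set.range_comp]
    rfl
  rw [range_eq, ← AlgHom.map_adjoin, TensorAlgebra.adjoin_range_ι, Algebra.map_top,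
    AlgHom.range_eq_top]
  exact RingCon.mk'_surjective _

theorem mem_center_of_forall_commute_ι {c : UniversalEnvelopingAlgebra R L}
    (hc : ∀ x : L, Commute c (ι R x)) :
    c ∈ Subalgebra.center R (UniversalEnvelopingAlgebra R L) := by
  have adjoin_le : Algebra.adjoin R (Set.range (ι R : L → UniversalEnvelopingAlgebra R L)) ≤
      Subalgebra.centralizer R {c} :=
    Algebra.adjoin_le <| by
      rintro _ ⟨x, rfl⟩
      rw [SetLike.mem_coe, Subalgebra.mem_centralizer_iff]
      rintro _ rfl
      exact (hc x).eq
  rw [adjoin_range_envelopingAlgebra_ι, top_le_iff, Subalgebra.centralizer_eq_top_iff_subset,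
    Set.singleton_subset_iff] at adjoin_le
  exact adjoin_le

end EnvelopingAlgebra

section Trace

variable {R A m n : Type*} [CommSemiring R] [Fintype m] [Fintype n]

theorem trace_map_algebraMap_mul_comm [Semiring A] [Algebra R A]
    (S : Matrix m n R) (T : Matrix n m A) :
    trace (S.map (algebraMap R A) * T) = trace (T * S.map (algebraMap R A)) := by
  simp only [trace, diag_apply, mul_apply, map_apply, Algebra.commutes]
  exact Finset.sum_comm

theorem commute_trace_of_commute_scalar_sub [DecidableEq n] [Ring A] [Algebra R A]
    {a : A} {S : Matrix n n R} {T : Matrix n n A}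
    (h : Commute (scalar n a - S.map (algebraMap R A)) T) : Commute a (trace T) := by
  have trace_eq : trace (scalar n a * T) = trace (T * scalar n a) := by
    have := congrArg trace h.eq
    rwa [sub_mul, mul_sub, trace_sub, trace_sub, trace_map_algebraMap_mul_comm,
      sub_left_inj] at this
  simpa [Commute, SemiconjBy, trace, Finset.mul_sum, Finset.sum_mul] using trace_eq

end Trace

section MatrixUnits

variable {R A n : Type*} [DecidableEq n]

/-- The matrix over `A` whose `(k, l)` entry is the image under `φ` of the matrix unit `e_{kl}`.
It packages all the generators `φ e_{kl}` so that the recursion for `e_{kl}^q` becomes taking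
matrix powers. -/
def matrixUnitImages [Zero R] [One R] (φ : Matrix n n R → A) : Matrix n n A :=
  of fun k l ↦ φ (single k l 1)

section LinearMap

variable [Fintype n] [CommSemiring R] [Semiring A] [Algebra R A]

theorem map_mul_single_eq (φ : Matrix n n R →ₗ[R] A) (Z : Matrix n n R) (k l : n) :
    φ (Z * single k l 1) = (Zᵀ.map (algebraMap R A) * matrixUnitImages φ) k l := by
  have expand : Z * single k l 1 = ∑ i, Z i k • single i l 1 := by
    ext a b
    simp [mul_apply, single_apply, Matrix.sum_apply, ite_and]
  simp [expand, -smul_single, matrixUnitImages, mul_apply, ← Algebra.smul_def]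

theorem map_single_mul_eq (φ : Matrix n n R →ₗ[R] A) (Z : Matrix n n R) (k l : n) :
    φ (single k l 1 * Z) = (matrixUnitImages φ * Zᵀ.map (algebraMap R A)) k l := by
  have expand : single k l 1 * Z = ∑ j, Z l j • single k j 1 := by
    ext a b
    simp [mul_apply, single_apply, Matrix.sum_apply, ite_and]
  simp [expand, -smul_single, matrixUnitImages, mul_apply, ← Algebra.commutes,
    ← Algebra.smul_def]

end LinearMap

variable [Fintype n] [CommRing R] [Ring A] [Algebra R A]

theorem commute_scalar_sub_matrixUnitImages (φ : Matrix n n R →ₗ⁅R⁆ A) (Z : Matrix n n R) :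
    Commute (scalar n (φ Z) - Zᵀ.map (algebraMap R A)) (matrixUnitImages φ) := by
  have commutator_eq : ⁅scalar n (φ Z), matrixUnitImages φ⁆ =
      ⁅Zᵀ.map (algebraMap R A), matrixUnitImages φ⁆ := by
    ext k l
    calc ⁅scalar n (φ Z), matrixUnitImages φ⁆ k l
        = ⁅φ Z, φ (single k l 1)⁆ := by simp [Ring.lie_def, matrixUnitImages]
      _ = φ (Z * single k l 1) - φ (single k l 1 * Z) := by
        rw [← φ.map_lie, Ring.lie_def, map_sub]
      _ = ⁅Zᵀ.map (algebraMap R A), matrixUnitImages φ⁆ k l :=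
        congrArg₂ (· - ·) (map_mul_single_eq (φ : Matrix n n R →ₗ[R] A) Z k l)
          (map_single_mul_eq (φ : Matrix n n R →ₗ[R] A) Z k l)
  rw [commute_iff_lie_eq, sub_lie, commutator_eq, sub_self]

theorem commute_trace_matrixUnitImages_pow (φ : Matrix n n R →ₗ⁅R⁆ A) (q : ℕ)
    (Z : Matrix n n R) : Commute (φ Z) (trace (matrixUnitImages φ ^ q)) :=
  commute_trace_of_commute_scalar_sub ((commute_scalar_sub_matrixUnitImages φ Z).pow_right q)

end MatrixUnits

theorem Epow_eq_matrixUnitImages_pow {m : ℕ} (q : ℕ) (k l : Fin m) :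
    Epow q k l = (matrixUnitImages (ι ℂ : glm m → UEA m) ^ q) k l := by
  induction q generalizing k l with
  | zero => simp [Epow, one_apply]
  | succ q ih => simp [Epow, ih, pow_succ', mul_apply, matrixUnitImages, E]

theorem Cas_eq_trace_matrixUnitImages_pow (m q : ℕ) :
    Cas m q = trace (matrixUnitImages (ι ℂ : glm m → UEA m) ^ q) := by
  simp only [Cas, trace, diag_apply, Epow_eq_matrixUnitImages_pow]

theorem statement2_general {R n : Type*} [CommRing R] [Fintype n] [DecidableEq n] (q : ℕ) :
    let c := trace (matrixUnitImages
      (ι R : Matrix n n R → UniversalEnvelopingAlgebra R (Matrix n n R)) ^ q)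
    (∀ Z : Matrix n n R, c * ι R Z = ι R Z * c) ∧
      c ∈ Subalgebra.center R (UniversalEnvelopingAlgebra R (Matrix n n R)) := by
  intro c
  have commute_ι (Z : Matrix n n R) : Commute c (ι R Z) :=
    (commute_trace_matrixUnitImages_pow (ι R) q Z).symm
  exact ⟨fun Z ↦ (commute_ι Z).eq, mem_center_of_forall_commute_ι commute_ι⟩

/-- `c_q` commutes with `ι(Z)` for every `Z ∈ gl(m,ℂ)`, and consequently
lies in the center of `U(gl(m,ℂ))`. -/
theorem statement2 (m : ℕ) (hm : 1 ≤ m) (q : ℕ) :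
    (∀ Z : glm m, Cas m q * UniversalEnvelopingAlgebra.ι ℂ Z =
        UniversalEnvelopingAlgebra.ι ℂ Z * Cas m q) ∧
      Cas m q ∈ Subalgebra.center ℂ (UEA m) := by
  rw [Cas_eq_trace_matrixUnitImages_pow]
  exact statement2_general q
end

section
/- In the universal enveloping algebra U(gl(m,ℂ)), for all q ≥ 0 and all indices 1 ≤ i,j,k,l ≤ m, the commutator identity [e_{ij}, ẽ_{kl}^q] = δ_{jl}·ẽ_{ki}^q − δ_{ik}·ẽ_{jl}^q holds, where [a,b] = ab − ba. -/
open Finset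

attribute [local instance 100] LieRing.ofAssociativeRing

/-- `ẽ_{kl}^q`, defined by `ẽ_{kl}^0 = δ_{kl}` and `ẽ_{kl}^{q+1} = −Σ_i e_{ik} ẽ_{il}^q`. -/
noncomputable def Etil {m : ℕ} : ℕ → Fin m → Fin m → UEA m
  | 0, k, l => if k = l then 1 else 0
  | q + 1, k, l => -∑ i, E i k * Etil q i l

/-!
Write `X` for the matrix with entries `X i j = E i j`. The recursion says that `ẽ_{kl}^q` is the
`(k, l)` entry of the `q`-th power of `-Xᵀ`. The commutator identity for the entries of a matrix `T`
over `U(gl(m))` says exactly that `T` commutes, in the ring of such matrices, with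
`e_{ij} ⊗ 1 + 1 ⊗ e_{ij}`, the sum of a scalar matrix and a matrix unit. For `T = Xᵀ` this is the
bracket relation of the matrix units, and commutation passes to negatives and powers.
-/

section GLRelations

open Matrix

variable {n A : Type*} [DecidableEq n]

/-- The defining relations of `gl(n)` in an associative ring, with `X i j` in the role of the
matrix unit `e_{ij}`. The family is encoded as a matrix over `A` so that its powers make sense. -/
def SatisfiesGLRelations [Ring A] (X : Matrix n n A) : Prop :=
  ∀ i j k l, X i j * X k l - X k l * X i j =
    (if j = k then X i l else 0) - (if i = l then X k j else 0)

variable [Fintype n]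

theorem SatisfiesGLRelations.of_lieHom {R : Type*} [CommRing R] [Ring A] [Algebra R A]
    (f : Matrix n n R →ₗ⁅R⁆ A) : SatisfiesGLRelations (of fun i j => f (single i j 1)) := by
  intro i j k l
  have map_single_mul_single (i j k l : n) :
      f (single i j (1 : R) * single k l 1) = if j = k then f (single i l 1) else 0 := by
    split_ifs with h
    · rw [h, single_mul_single_same, one_mul]
    · rw [single_mul_single_of_ne _ _ _ _ h, map_zero]
  calc f (single i j 1) * f (single k l 1) - f (single k l 1) * f (single i j 1)
      = f ⁅single i j (1 : R), single k l (1 : R)⁆ := by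
        rw [LieHom.map_lie, LieRing.of_associative_ring_bracket]
    _ = (if j = k then f (single i l 1) else 0) - (if i = l then f (single k j 1) else 0) := by
        rw [LieRing.of_associative_ring_bracket, map_sub, map_single_mul_single,
          map_single_mul_single, if_congr (eq_comm (a := l)) rfl rfl]

theorem single_one_mul_apply {m p : Type*} [DecidableEq m] [NonAssocSemiring A] (i k : m)
    (j : n) (l : p) (T : Matrix n p A) :
    (single i j (1 : A) * T) k l = if i = k then T j l else 0 := by
  split_ifs with h
  · rw [h, single_mul_apply_same, one_mul]
  · exact single_mul_apply_of_ne _ _ _ _ _ (Ne.symm h) _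

theorem mul_single_one_apply {m p : Type*} [DecidableEq m] [NonAssocSemiring A] (i : n)
    (j l : m) (k : p) (T : Matrix p n A) :
    (T * single i j (1 : A)) k l = if j = l then T k i else 0 := by
  split_ifs with h
  · rw [h, mul_single_apply_same, mul_one]
  · exact mul_single_apply_of_ne _ _ _ _ _ (Ne.symm h) _

variable [Ring A]

theorem commute_scalar_add_single_one_iff (a : A) (i j : n) (T : Matrix n n A) :
    Commute (scalar n a + single i j (1 : A)) T ↔
      ∀ k l, a * T k l - T k l * a =
        (if j = l then T k i else 0) - (if i = k then T j l else 0) := by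
  simp only [commute_iff_eq, ← Matrix.ext_iff, add_mul, mul_add, Matrix.add_apply, scalar_apply,
    diagonal_mul, mul_diagonal, single_one_mul_apply, mul_single_one_apply,
    sub_eq_sub_iff_add_eq_add, add_comm (T _ _ * a)]

theorem SatisfiesGLRelations.commute_transpose {X : Matrix n n A} (hX : SatisfiesGLRelations X)
    (i j : n) : Commute (scalar n (X i j) + single i j 1) Xᵀ :=
  (commute_scalar_add_single_one_iff _ i j _).2 fun k l => hX i j l k

theorem statement3_general {X : Matrix n n A} (hX : SatisfiesGLRelations X) (q : ℕ)
    (i j k l : n) :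
    X i j * ((-Xᵀ) ^ q) k l - ((-Xᵀ) ^ q) k l * X i j =
      (if j = l then ((-Xᵀ) ^ q) k i else 0) - (if i = k then ((-Xᵀ) ^ q) j l else 0) :=
  (commute_scalar_add_single_one_iff _ i j _).1
    ((hX.commute_transpose i j).neg_right.pow_right q) k l

theorem satisfiesGLRelations_E (m : ℕ) : SatisfiesGLRelations (of (E (m := m))) :=
  .of_lieHom (UniversalEnvelopingAlgebra.ι ℂ)

theorem Etil_eq_neg_transpose_pow_apply {m : ℕ} (q : ℕ) (k l : Fin m) :
    Etil q k l = ((-(of (E (m := m)))ᵀ) ^ q) k l := by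
  induction q generalizing k l with
  | zero => simp [Etil, one_apply]
  | succ q ih => simp [Etil, ih, pow_succ', mul_apply]

end GLRelations

/-- `[e_{ij}, ẽ_{kl}^q] = δ_{jl} ẽ_{ki}^q − δ_{ik} ẽ_{jl}^q`. -/
theorem statement3 (m : ℕ) (hm : 1 ≤ m) (q : ℕ) (i j k l : Fin m) :
    E i j * Etil q k l - Etil q k l * E i j =
      (if j = l then Etil (m := m) q k i else 0) -
        (if i = k then Etil (m := m) q j l else 0) := by
  simpa only [Etil_eq_neg_transpose_pow_apply, Matrix.of_apply] using
    statement3_general (satisfiesGLRelations_E m) q i j k l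
end

section
/- (Perelomov–Popov formula for c_q.) Let V be a complex Lie module over gl(m,ℂ), let ρ = (ρ^1,…,ρ^m) ∈ ℤ^m with ρ^1 ≥ ρ^2 ≥ … ≥ ρ^m, and let v ∈ V satisfy e_{ij}·v = 0 for all i < j and e_{kk}·v = ρ^k v for all k. Then for every q ≥ 0, Σ_{k=1}^m e_{kk}^q v = (Σ_{i=1}^m w_{-i}^q γ_{-i}) v, where w_{-i} := ρ^i + (m − i) and γ_{-i} := Π_{j≠i} (1 − 1/(w_{-i} − w_{-j})). -/
open Finset

attribute [local instance 100] LieRing.ofAssociativeRing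

/-- The operators `e_{kl}^q` on a `gl(m,ℂ)`-module `V`:
`e_{kl}^0 w = δ_{kl} w` and `e_{kl}^{q+1} w = Σ_i e_{ki}·(e_{il}^q w)`. -/
noncomputable def epowV {m : ℕ} {V : Type*} [AddCommGroup V]
    [LieRingModule (glm m) V] :
    ℕ → Fin m → Fin m → V → V
  | 0, k, l, w => if k = l then w else 0
  | q + 1, k, l, w => ∑ i, ⁅Matrix.single k i (1 : ℂ), epowV q i l w⁆

/-- The operators `ẽ_{kl}^q` on a `gl(m,ℂ)`-module `V`:
`ẽ_{kl}^0 w = δ_{kl} w` and `ẽ_{kl}^{q+1} w = −Σ_i e_{ik}·(ẽ_{il}^q w)`. -/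
noncomputable def etilV {m : ℕ} {V : Type*} [AddCommGroup V]
    [LieRingModule (glm m) V] :
    ℕ → Fin m → Fin m → V → V
  | 0, k, l, w => if k = l then w else 0
  | q + 1, k, l, w => -∑ i, ⁅Matrix.single i k (1 : ℂ), etilV q i l w⁆

/-- The `(0,1)`-conformal weight `w_{-i} = ρ^i + (m − i)` (here `i : Fin m` corresponds to
the index `i+1` of the paper, so `w_{-i} = ρ_i + m − 1 − i`). -/
noncomputable def wMinus (m : ℕ) (ρ : Fin m → ℤ) (i : Fin m) : ℂ :=
  (ρ i : ℂ) + ((m : ℂ) - 1 - (i : ℕ))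

/-!
Write `w i = μ i + (m - 1 - i)`. On a highest weight vector `v` of weight `μ`, the commutation
relations of the `e_{kl}^q` with `gl(m)` give
`e_{kk}^{q+1} v = w k • e_{kk}^q v - ∑_{i > k} e_{ii}^q v`.
The sums `P s q = ∑_{i ∈ s} w i ^ q * ∏_{j ∈ s \ {i}} (1 - 1 / (w i - w j))` obey the same
recurrence: adding a new element `a` to `s`, the difference `D q = P (insert a s) q - P s q`
satisfies `D (q + 1) = w a * D q - P s q`. Its initial value `D 0 = 1` is the partial fraction
decomposition of `∏_{j ∈ s} (1 - 1 / (u - w j))` at `u = w a`.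
-/

section PartialFractions

variable {ι K : Type*} [DecidableEq ι] [Field K] {s : Finset ι} {w : ι → K}

theorem prod_sub_div_sub_eq_one_add_sum (z : ι → K) (hw : Set.InjOn w s) {u : K}
    (hu : ∀ i ∈ s, u ≠ w i) :
    ∏ j ∈ s, (u - z j) / (u - w j) =
      1 + ∑ i ∈ s, (w i - z i) * (∏ j ∈ s.erase i, (w i - z j) / (w i - w j)) / (u - w i) := by
  have hdeg : (Lagrange.nodal s z - Lagrange.nodal s w).degree < #s := by
    rw [← Lagrange.degree_nodal (s := s) (v := z)]
    exact Polynomial.degree_sub_lt_left (by simp only [Lagrange.degree_nodal])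
      Lagrange.nodal_ne_zero
      (Lagrange.nodal_monic.leadingCoeff.trans Lagrange.nodal_monic.leadingCoeff.symm)
  have hinterp := Lagrange.eq_interpolate_of_eval_eq (fun i ↦ ∏ j ∈ s, (w i - z j)) hw hdeg
    fun i hi ↦ by
      rw [Polynomial.eval_sub, Lagrange.eval_nodal_at_node hi, sub_zero, Lagrange.eval_nodal]
  have heval := congrArg (Polynomial.eval u) hinterp
  rw [Lagrange.eval_interpolate_not_at_node _ hu, Polynomial.eval_sub, Lagrange.eval_nodal,
    Lagrange.eval_nodal, sub_eq_iff_eq_add'] at heval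
  have hprod : ∏ j ∈ s, (u - w j) ≠ 0 := prod_ne_zero_iff.mpr fun j hj ↦ sub_ne_zero.mpr (hu j hj)
  rw [prod_div_distrib, heval, add_div, div_self hprod, mul_div_cancel_left₀ _ hprod]
  congr 1
  refine sum_congr rfl fun i hi ↦ ?_
  rw [← mul_prod_erase s _ hi, prod_div_distrib, Lagrange.nodalWeight, prod_inv_distrib]
  ring

end PartialFractions

section PerelomovPopov

variable {ι K : Type*} [DecidableEq ι] [Field K] {w : ι → K} {s : Finset ι} {a i : ι}

/-- The coefficient `γ_i = ∏_{j ≠ i} (1 - 1 / (w i - w j))` of the Perelomov–Popov formula, with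
the indices `j` restricted to a finite set `s`. -/
def perelomovPopovCoeff (w : ι → K) (s : Finset ι) (i : ι) : K :=
  ∏ j ∈ s.erase i, (1 - 1 / (w i - w j))

/-- The right-hand side `∑ i, w i ^ q * γ_i` of the Perelomov–Popov formula, over a finite set `s`
of indices; letting `s` vary is what makes it accessible to induction. -/
def perelomovPopovSum (w : ι → K) (s : Finset ι) (q : ℕ) : K :=
  ∑ i ∈ s, w i ^ q * perelomovPopovCoeff w s i

theorem perelomovPopovCoeff_insert_of_mem (ha : a ∉ s) (hi : i ∈ s) :
    perelomovPopovCoeff w (insert a s) i =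
      (1 - 1 / (w i - w a)) * perelomovPopovCoeff w s i := by
  have hai : a ≠ i := fun h ↦ ha (h ▸ hi)
  rw [perelomovPopovCoeff, erase_insert_of_ne hai,
    prod_insert fun h ↦ ha (mem_of_mem_erase h), perelomovPopovCoeff]

theorem perelomovPopovSum_insert (ha : a ∉ s) (q : ℕ) :
    perelomovPopovSum w (insert a s) q = perelomovPopovSum w s q +
      (w a ^ q * ∏ j ∈ s, (1 - 1 / (w a - w j)) +
        ∑ i ∈ s, w i ^ q * (perelomovPopovCoeff w s i / (w a - w i))) := by
  have hsum : ∑ i ∈ s, w i ^ q * perelomovPopovCoeff w (insert a s) i =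
      perelomovPopovSum w s q + ∑ i ∈ s, w i ^ q * (perelomovPopovCoeff w s i / (w a - w i)) := by
    rw [perelomovPopovSum, ← sum_add_distrib]
    refine sum_congr rfl fun i hi ↦ ?_
    rw [perelomovPopovCoeff_insert_of_mem ha hi, ← neg_sub (w a) (w i), one_div, inv_neg]
    ring
  rw [perelomovPopovSum, sum_insert ha, hsum, perelomovPopovCoeff, erase_insert ha]
  ring

theorem prod_one_sub_one_div_eq_one_sub_sum (hw : Set.InjOn w s) {u : K}
    (hu : ∀ i ∈ s, u ≠ w i) :
    ∏ j ∈ s, (1 - 1 / (u - w j)) = 1 - ∑ i ∈ s, perelomovPopovCoeff w s i / (u - w i) := by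
  have one_sub_eq {x : K} {j : ι} (h : x ≠ w j) : (x - (w j + 1)) / (x - w j) =
      1 - 1 / (x - w j) := by
    rw [← sub_sub, sub_div, div_self (sub_ne_zero.mpr h)]
  have hcoeff : ∀ i ∈ s,
      ∏ j ∈ s.erase i, (w i - (w j + 1)) / (w i - w j) = perelomovPopovCoeff w s i := fun i hi ↦
    prod_congr rfl fun j hj ↦ one_sub_eq fun h ↦
      ne_of_mem_erase hj (hw hi (mem_of_mem_erase hj) h).symm
  rw [← prod_congr rfl fun j hj ↦ one_sub_eq (hu j hj), prod_sub_div_sub_eq_one_add_sum _ hw hu,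
    sub_eq_add_neg, ← sum_neg_distrib]
  congr 1
  refine sum_congr rfl fun i hi ↦ ?_
  rw [hcoeff i hi]
  ring

theorem perelomovPopovSum_insert_zero (ha : a ∉ s) (hw : Set.InjOn w (insert a s : Finset ι)) :
    perelomovPopovSum w (insert a s) 0 = perelomovPopovSum w s 0 + 1 := by
  rw [coe_insert, Set.injOn_insert (mem_coe.not.mpr ha)] at hw
  have hne : ∀ i ∈ s, w a ≠ w i := fun i hi h ↦ hw.2 ⟨i, hi, h.symm⟩
  rw [perelomovPopovSum_insert ha, prod_one_sub_one_div_eq_one_sub_sum hw.1 hne]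
  simp only [pow_zero, one_mul, sub_add_cancel]

theorem perelomovPopovSum_insert_succ (ha : a ∉ s) (hne : ∀ i ∈ s, w a ≠ w i) (q : ℕ) :
    perelomovPopovSum w (insert a s) (q + 1) - perelomovPopovSum w s (q + 1) =
      w a * (perelomovPopovSum w (insert a s) q - perelomovPopovSum w s q) -
        perelomovPopovSum w s q := by
  have hsum : ∑ i ∈ s, w i ^ (q + 1) * (perelomovPopovCoeff w s i / (w a - w i)) =
      w a * ∑ i ∈ s, w i ^ q * (perelomovPopovCoeff w s i / (w a - w i)) -
        perelomovPopovSum w s q := by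
    rw [perelomovPopovSum, mul_sum, ← sum_sub_distrib]
    refine sum_congr rfl fun i hi ↦ ?_
    have := sub_ne_zero.mpr (hne i hi)
    field_simp
    ring
  rw [perelomovPopovSum_insert ha, perelomovPopovSum_insert ha, hsum]
  ring

theorem sum_eq_perelomovPopovSum_smul {ι K V : Type*} [LinearOrder ι] [LocallyFiniteOrderTop ι]
    [Field K] [AddCommGroup V] [Module K V] {w : ι → K} {x : ℕ → ι → V} {v : V}
    (h_zero : ∀ k, x 0 k = v) (h_succ : ∀ q k, x (q + 1) k = w k • x q k - ∑ i ∈ Ioi k, x q i)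
    {s : Finset ι} (hs : IsUpperSet (s : Set ι)) (hw : Set.InjOn w s) (q : ℕ) :
    ∑ k ∈ s, x q k = perelomovPopovSum w s q • v := by
  induction s using Finset.induction_on_min generalizing q with
  | empty => simp [perelomovPopovSum]
  | insert a s has ih =>
    have ha : a ∉ s := fun h ↦ lt_irrefl a (has a h)
    have hIoi : Ioi a = s := by
      ext j
      rw [mem_Ioi]
      refine ⟨fun haj ↦ ?_, has j⟩
      exact mem_of_mem_insert_of_ne (hs haj.le (mem_insert_self a s)) haj.ne'
    have hs' : IsUpperSet (s : Set ι) := by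
      rw [← hIoi, coe_Ioi]
      exact isUpperSet_Ioi a
    have ih' := ih hs' (hw.mono (coe_subset.mpr (subset_insert a s)))
    have hne : ∀ i ∈ s, w a ≠ w i := fun i hi h ↦
      (has i hi).ne (hw (mem_insert_self a s) (mem_insert_of_mem hi) h)
    have hxa : ∀ q, x q a = (perelomovPopovSum w (insert a s) q - perelomovPopovSum w s q) • v := by
      intro q
      induction q with
      | zero => rw [h_zero, perelomovPopovSum_insert_zero ha hw, add_sub_cancel_left, one_smul]
      | succ q ihq =>
        rw [h_succ, ihq, hIoi, ih', perelomovPopovSum_insert_succ ha hne, smul_smul, ← sub_smul]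
    rw [sum_insert ha, hxa, ih', ← add_smul, sub_add_cancel]

end PerelomovPopov

section MatrixUnits

theorem lie_single_single {n R : Type*} [Fintype n] [DecidableEq n] [Ring R]
    (i j k l : n) (a b : R) :
    ⁅Matrix.single i j a, Matrix.single k l b⁆ =
      (if j = k then Matrix.single i l (a * b) else 0) -
        (if i = l then Matrix.single k j (b * a) else 0) := by
  have single_mul (i j k l : n) (a b : R) : Matrix.single i j a * Matrix.single k l b =
      if j = k then Matrix.single i l (a * b) else 0 := by
    split_ifs with h
    · rw [h, Matrix.single_mul_single_same]
    · exact Matrix.single_mul_single_of_ne _ i j _ h b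
  simp only [Ring.lie_def, single_mul, eq_comm (a := l)]

variable {m : ℕ} {V : Type*} [AddCommGroup V] [LieRingModule (glm m) V]

theorem epowV_apply_zero (q : ℕ) (k l : Fin m) : epowV q k l (0 : V) = 0 := by
  induction q generalizing k with
  | zero => exact ite_self 0
  | succ q ih => simp only [epowV, ih, lie_zero, sum_const_zero]

theorem epowV_smul [Module ℂ V] [LieModule ℂ (glm m) V] (q : ℕ) (k l : Fin m) (c : ℂ) (v : V) :
    epowV q k l (c • v) = c • epowV q k l v := by
  induction q generalizing k with
  | zero => simp only [epowV, smul_ite, smul_zero]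
  | succ q ih => simp only [epowV, ih, lie_smul, smul_sum]

theorem lie_single_epowV (q : ℕ) (i j k l : Fin m) (v : V) :
    ⁅(Matrix.single i j 1 : glm m), epowV q k l v⁆ =
      epowV q k l ⁅(Matrix.single i j 1 : glm m), v⁆ +
        (if j = k then epowV q i l v else 0) - (if i = l then epowV q k j v else 0) := by
  induction q generalizing k with
  | zero =>
    by_cases hkl : k = l <;> by_cases hjk : j = k <;> by_cases hil : i = l <;>
      simp_all [epowV, eq_comm]
  | succ q ih =>
    have hterm : ∀ p : Fin m,
        ⁅(Matrix.single i j 1 : glm m), ⁅(Matrix.single k p 1 : glm m), epowV q p l v⁆⁆ =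
          (if j = k then ⁅(Matrix.single i p 1 : glm m), epowV q p l v⁆ else 0) -
            (if i = p then ⁅(Matrix.single k j 1 : glm m), epowV q p l v⁆ else 0) +
          (⁅(Matrix.single k p 1 : glm m), epowV q p l ⁅(Matrix.single i j 1 : glm m), v⁆⁆ +
            (if j = p then ⁅(Matrix.single k p 1 : glm m), epowV q i l v⁆ else 0) -
            (if i = l then ⁅(Matrix.single k p 1 : glm m), epowV q p j v⁆ else 0)) := by
      intro p
      rw [leibniz_lie, ih, lie_single_single, sub_lie, lie_sub, lie_add]
      split_ifs <;> simp only [mul_one, lie_zero, zero_lie]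
    simp only [epowV, lie_sum, hterm, sum_add_distrib, sum_sub_distrib, sum_ite_irrel,
      sum_ite_eq, sum_const_zero, mem_univ, if_true]
    abel

end MatrixUnits

section HighestWeight

variable {m : ℕ} {V : Type*} [AddCommGroup V] [LieRingModule (glm m) V] {v : V}

theorem epowV_eq_zero_of_lt
    (hv : ∀ i j : Fin m, i < j → ⁅(Matrix.single i j 1 : glm m), v⁆ = 0)
    (q : ℕ) {k l : Fin m} (hkl : k < l) : epowV q k l v = 0 := by
  induction q generalizing k with
  | zero => exact if_neg hkl.ne
  | succ q ih =>
    refine sum_eq_zero fun i _ ↦ ?_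
    rcases lt_or_ge i l with hil | hli
    · rw [ih hil, lie_zero]
    · rw [lie_single_epowV, hv k i (hkl.trans_le hli), epowV_apply_zero, ih hkl, ite_self,
        if_neg hkl.ne, add_zero, sub_zero]

/-- The weight `μ` shifted by `(m - 1, m - 2, …, 0)`: the numbers `w_{-i}` of the paper, for a
complex weight. -/
def shiftedWeight (μ : Fin m → ℂ) (i : Fin m) : ℂ :=
  μ i + (m - 1 - (i : ℕ))

theorem epowV_succ_diag [Module ℂ V] [LieModule ℂ (glm m) V] {μ : Fin m → ℂ}
    (hv : ∀ i j : Fin m, i < j → ⁅(Matrix.single i j 1 : glm m), v⁆ = 0)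
    (hμ : ∀ k : Fin m, ⁅(Matrix.single k k 1 : glm m), v⁆ = μ k • v) (q : ℕ) (k : Fin m) :
    epowV (q + 1) k k v = shiftedWeight μ k • epowV q k k v - ∑ i ∈ Ioi k, epowV q i i v := by
  have hterm : ∀ i : Fin m, ⁅(Matrix.single k i 1 : glm m), epowV q i k v⁆ =
      (if i = k then μ k • epowV q k k v else 0) +
        (if k < i then epowV q k k v - epowV q i i v else 0) := by
    intro i
    rcases lt_trichotomy i k with hik | rfl | hki
    · rw [epowV_eq_zero_of_lt hv q hik, lie_zero, if_neg hik.ne, if_neg hik.not_gt, add_zero]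
    · simp [lie_single_epowV, hμ, epowV_smul]
    · simp [lie_single_epowV, hv k i hki, epowV_apply_zero, hki, hki.ne']
  have hcard : ((#(Ioi k) : ℕ) : ℂ) = m - 1 - (k : ℕ) := by
    rw [Fin.card_Ioi, Nat.sub_sub, Nat.cast_sub (Nat.one_add_le_iff.mpr k.isLt), Nat.cast_add,
      Nat.cast_one, sub_sub]
  calc epowV (q + 1) k k v
    _ = μ k • epowV q k k v + ∑ i ∈ Ioi k, (epowV q k k v - epowV q i i v) := by
      simp only [epowV, hterm, sum_add_distrib, sum_ite_eq', mem_univ, if_true, ← sum_filter,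
        filter_lt_eq_Ioi]
    _ = shiftedWeight μ k • epowV q k k v - ∑ i ∈ Ioi k, epowV q i i v := by
      rw [sum_sub_distrib, sum_const, ← Nat.cast_smul_eq_nsmul ℂ, hcard, shiftedWeight, add_smul,
        add_sub_assoc]

theorem statement6_general [Module ℂ V] [LieModule ℂ (glm m) V] {μ : Fin m → ℂ}
    (hw : Function.Injective (shiftedWeight μ))
    (hv : ∀ i j : Fin m, i < j → ⁅(Matrix.single i j 1 : glm m), v⁆ = 0)
    (hμ : ∀ k : Fin m, ⁅(Matrix.single k k 1 : glm m), v⁆ = μ k • v) (q : ℕ) :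
    ∑ k : Fin m, epowV q k k v = perelomovPopovSum (shiftedWeight μ) univ q • v :=
  sum_eq_perelomovPopovSum_smul (x := fun q k ↦ epowV q k k v) (fun _ ↦ if_pos rfl)
    (epowV_succ_diag hv hμ) (by simpa only [coe_univ] using isUpperSet_univ) hw.injOn q

end HighestWeight

theorem wMinus_injective {m : ℕ} {ρ : Fin m → ℤ} (hρ : Antitone ρ) :
    Function.Injective (wMinus m ρ) := by
  have hanti : StrictAnti fun i : Fin m ↦ ρ i - (i : ℕ) := fun i j hij ↦
    Int.sub_lt_sub_of_le_of_lt (hρ hij.le) (Int.ofNat_lt.mpr hij)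
  intro i j hij
  refine hanti.injective (Int.cast_injective (α := ℂ) ?_)
  simp only [wMinus] at hij
  push_cast
  linear_combination hij

/-- Perelomov–Popov formula for `c_q`: on a highest weight vector of weight
`ρ` with `ρ^1 ≥ … ≥ ρ^m`, `Σ_k e_{kk}^q` acts by `Σ_i w_{-i}^q γ_{-i}` with
`γ_{-i} = Π_{j≠i} (1 − 1/(w_{-i} − w_{-j}))`. -/
theorem statement6 (m : ℕ) (hm : 1 ≤ m) {V : Type*} [AddCommGroup V] [Module ℂ V]
    [LieRingModule (glm m) V] [LieModule ℂ (glm m) V]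
    (ρ : Fin m → ℤ) (hρ : ∀ i j : Fin m, i ≤ j → ρ j ≤ ρ i)
    (v : V)
    (hv1 : ∀ i j : Fin m, i < j → ⁅Matrix.single i j (1 : ℂ), v⁆ = 0)
    (hv2 : ∀ k : Fin m, ⁅Matrix.single k k (1 : ℂ), v⁆ = (ρ k : ℂ) • v)
    (q : ℕ) :
    ∑ k : Fin m, epowV (m := m) q k k v =
      (∑ i : Fin m, (wMinus m ρ i) ^ q *
        ∏ j ∈ Finset.univ.erase i, (1 - 1 / (wMinus m ρ i - wMinus m ρ j))) • v := by
  exact statement6_general (wMinus_injective fun i j ↦ hρ i j) hv1 hv2 q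
end
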